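/- arXiv:1609.02879 — 2 statements merged into one kernel-verified Lean document; each statement's English description precedes it below -/
import Mathlib

section
/- Let P, Q ∈ R[y] with R real closed and deg P = p ≥ 1. Let Her(P;Q) be the p×p Hermite matrix whose (j₁,j₂) entry is the trace of the multiplication-by-Q(y)·y^{j₁+j₂−2} map on the R-vector space R[y]/(P). Then the signature of the symmetric matrix Her(P;Q) equals the Tarski query TaQu(Q;P) = Σ_{θ: P(θ)=0} sign(Q(θ)). -/
open Polynomial

/-- The sign of a real number as an integer. -/
noncomputable def sgn (a : ℝ) : ℤ := if a < 0 then -1 else if a = 0 then 0 else 1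

/-- The `p × p` Hermite matrix of `P` and `Q`: its `(j₁, j₂)` entry (with `j₁, j₂` zero-based)
is the trace of the multiplication-by-`Q·y^{j₁+j₂}` map on `ℝ[y]/(P)`. -/
noncomputable def HerMat (p : ℕ) (P Q : Polynomial ℝ) : Matrix (Fin p) (Fin p) ℝ :=
  fun j₁ j₂ =>
    LinearMap.trace ℝ (AdjoinRoot P)
      (LinearMap.mulLeft ℝ (AdjoinRoot.mk P (Q * X ^ (j₁.val + j₂.val))))

/-!
The trace of multiplication by `g` on `ℝ[X]/(P)` is the sum of `g` over the complex roots of `P`.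
Hence, if `f` is the polynomial with coefficient vector `v`, the Hermite form is
`vᵀ Her(P;Q) v = ∑ m_z Q(z) f(z)²`, where `m_z` is the multiplicity of the root `z`. Conjugate roots
contribute conjugate terms, so the form is the pullback along `f ↦ (f(z))_z`, with `z` running
through the real roots and the roots in the open upper half-plane, of the orthogonal sum of the
diagonal real form with weights `m_x Q(x)` and the real part of a complex quadratic form. Evaluation
is surjective, because conjugation-equivariant data have a real Lagrange interpolant, and pullback
along a surjection keeps the signature. Multiplication by `i` is an isometry of the real part of a
complex form onto its negative, so that summand has signature `0`, and only the signs of `Q` at the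
real roots remain.
-/

open scoped ComplexConjugate Matrix

theorem sgn_eq_sign (a : ℝ) : sgn a = SignType.sign a := by
  rcases lt_trichotomy a 0 with h | rfl | h
  · simp [sgn, h]
  · simp [sgn]
  · simp [sgn, h, h.ne', h.not_gt]

section Signature

open QuadraticMap

variable {M M' : Type*} [AddCommGroup M] [AddCommGroup M']

theorem weightedSumSquares_prod_equivalent {R ι κ : Type*} [CommSemiring R] [Fintype ι] [Fintype κ]
    (w : ι → R) (w' : κ → R) :
    ((weightedSumSquares R w).prod (weightedSumSquares R w')).Equivalent
      (weightedSumSquares R (Sum.elim w w')) :=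
  ⟨{ (LinearEquiv.sumArrowLequivProdArrow ι κ R R).symm with
      map_app' := fun x => by
        simp only [prod_apply, weightedSumSquares_apply, Fintype.sum_sum_type]
        rfl }⟩

section LinearOrderedRing

variable {R : Type*} [CommRing R] [LinearOrder R] [Module R M] [Module R M']

/-- The signature of a quadratic form, as an integer: over an ordered field, the number of positive
weights minus the number of negative weights in any diagonalization. -/
noncomputable def formSignature (q : QuadraticForm R M) : ℤ :=
  (sigPos q : ℤ) - sigNeg q

theorem formSignature_eq_of_equivalent {q : QuadraticForm R M} {q' : QuadraticForm R M'}
    (h : q.Equivalent q') : formSignature q = formSignature q' := by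
  rw [formSignature, formSignature, h.sigPos_eq, h.sigNeg_eq]

theorem formSignature_eq_zero_of_equivalent_neg {q : QuadraticForm R M} (h : q.Equivalent (-q)) :
    formSignature q = 0 := by
  rw [formSignature, h.sigPos_eq, sigPos_neg, sub_self]

end LinearOrderedRing

section LinearOrderedField

variable {𝕜 : Type*} [Field 𝕜] [LinearOrder 𝕜] [Module 𝕜 M] [Module 𝕜 M']

theorem sigPos_comp_le [FiniteDimensional 𝕜 M] [FiniteDimensional 𝕜 M']
    (q : QuadraticForm 𝕜 M') (f : M →ₗ[𝕜] M') : sigPos (q.comp f) ≤ sigPos q := by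
  obtain ⟨V, hV, hpos⟩ := exists_finrank_eq_sigPos_and_posDef (q.comp f)
  have hinj : Function.Injective (f.domRestrict V) := by
    refine (injective_iff_map_eq_zero _).2 fun v hv => of_not_not fun hv0 => (hpos v hv0).ne' ?_
    simp_all
  rw [← hV, ← LinearMap.finrank_range_of_inj hinj]
  refine le_sigPos_of_posDef q ?_
  rintro ⟨_, v, rfl⟩ hv
  exact hpos v fun hv0 => hv (by simp [hv0])

variable [FiniteDimensional 𝕜 M] [FiniteDimensional 𝕜 M']

theorem sigPos_comp_of_surjective (q : QuadraticForm 𝕜 M') {f : M →ₗ[𝕜] M'}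
    (hf : Function.Surjective f) : sigPos (q.comp f) = sigPos q := by
  obtain ⟨g, hfg⟩ := f.exists_rightInverse_of_surjective (LinearMap.range_eq_top.2 hf)
  refine (sigPos_comp_le q f).antisymm ?_
  calc sigPos q = sigPos ((q.comp f).comp g) := by
        congr 1
        ext x
        simp [← LinearMap.comp_apply, hfg]
    _ ≤ sigPos (q.comp f) := sigPos_comp_le _ g

theorem formSignature_comp_of_surjective (q : QuadraticForm 𝕜 M') {f : M →ₗ[𝕜] M'}
    (hf : Function.Surjective f) : formSignature (q.comp f) = formSignature q := by
  have hneg : sigNeg (q.comp f) = sigNeg q := sigPos_comp_of_surjective (-q) hf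
  rw [formSignature, formSignature, sigPos_comp_of_surjective q hf, hneg]

variable [IsStrictOrderedRing 𝕜]

theorem formSignature_weightedSumSquares {ι : Type*} [Fintype ι] (w : ι → 𝕜) :
    formSignature (weightedSumSquares 𝕜 w) = ((Finset.univ.filter fun i => 0 < w i).card : ℤ) -
      ((Finset.univ.filter fun i => w i < 0).card : ℤ) := by
  rw [formSignature, QuadraticForm.sigPos_weightedSumSquares,
    QuadraticForm.sigNeg_weightedSumSquares, Set.ncard_eq_toFinset_card',
    Set.ncard_eq_toFinset_card', Set.toFinset_ofPred, Set.toFinset_ofPred]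

theorem formSignature_weightedSumSquares_eq_sum_sign {ι : Type*} [Fintype ι] (w : ι → 𝕜) :
    formSignature (weightedSumSquares 𝕜 w) = ∑ i, (SignType.sign (w i) : ℤ) := by
  rw [formSignature_weightedSumSquares, Finset.card_filter, Finset.card_filter, Nat.cast_sum,
    Nat.cast_sum, ← Finset.sum_sub_distrib]
  refine Finset.sum_congr rfl fun i _ => ?_
  rcases lt_trichotomy (w i) 0 with h | h | h <;> simp [h, h.not_gt]

theorem formSignature_prod (q : QuadraticForm 𝕜 M) (q' : QuadraticForm 𝕜 M') :
    formSignature (q.prod q') = formSignature q + formSignature q' := by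
  have : Invertible (2 : 𝕜) := invertibleOfNonzero two_ne_zero
  obtain ⟨w, hw⟩ := q.equivalent_weightedSumSquares
  obtain ⟨w', hw'⟩ := q'.equivalent_weightedSumSquares
  rw [formSignature_eq_of_equivalent hw, formSignature_eq_of_equivalent hw',
    formSignature_eq_of_equivalent (hw.prod hw'),
    formSignature_eq_of_equivalent (weightedSumSquares_prod_equivalent w w')]
  simp [formSignature_weightedSumSquares_eq_sum_sign]

end LinearOrderedField

theorem formSignature_toQuadraticForm' {n : Type*} [Fintype n] [DecidableEq n] {A : Matrix n n ℝ}
    (hA : A.IsHermitian) :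
    formSignature A.toQuadraticForm' =
      ((Finset.univ.filter fun i => 0 < hA.eigenvalues i).card : ℤ) -
        ((Finset.univ.filter fun i => hA.eigenvalues i < 0).card : ℤ) := by
  let U := hA.eigenvectorUnitary
  have hspectral : A = U * Matrix.diagonal hA.eigenvalues * star (U : Matrix n n ℝ) :=
    hA.spectral_theorem.trans (Unitary.conjStarAlgAut_apply _ _)
  have hform : A.toQuadraticForm' =
      (weightedSumSquares ℝ hA.eigenvalues).comp (star (U : Matrix n n ℝ)).mulVecLin := by
    ext v
    calc A.toQuadraticForm' v = v ⬝ᵥ A *ᵥ v := Matrix.toLinearMap₂'_apply' A v v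
      _ = (star (U : Matrix n n ℝ) *ᵥ v) ⬝ᵥ
            (Matrix.diagonal hA.eigenvalues *ᵥ (star (U : Matrix n n ℝ) *ᵥ v)) := by
        conv_lhs => rw [hspectral]
        rw [← Matrix.mulVec_mulVec, ← Matrix.mulVec_mulVec, Matrix.dotProduct_mulVec,
          ← Matrix.mulVec_transpose]
        rfl
      _ = _ := by
        simp only [QuadraticMap.comp_apply, weightedSumSquares_apply, dotProduct, smul_eq_mul,
          Matrix.mulVec_diagonal, Matrix.mulVecLin_apply, mul_left_comm]
  have hU : IsUnit (star (U : Matrix n n ℝ)) := ⟨Unitary.toUnits (star U), rfl⟩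
  rw [hform, formSignature_comp_of_surjective _ (Matrix.mulVec_surjective_iff_isUnit.2 hU),
    formSignature_weightedSumSquares]

theorem formSignature_re_eq_zero [Module ℂ M] (q : QuadraticForm ℂ M) [Module ℝ M]
    [IsScalarTower ℝ ℂ M] : formSignature (Complex.reLm.compQuadraticMap' q) = 0 :=
  formSignature_eq_zero_of_equivalent_neg
    ⟨{ (LinearEquiv.smulOfNeZero ℂ M Complex.I Complex.I_ne_zero).restrictScalars ℝ with
        map_app' := fun x => by simp [QuadraticMap.map_smul] }⟩

end Signature

section Trace

variable {n : Type*} [Fintype n] [DecidableEq n]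

theorem det_aeval_eq_prod_roots_charpoly {R : Type*} [CommRing R] [IsDomain R] {M : Matrix n n R}
    (hM : M.charpoly.Splits) {g : R[X]} (hg : g.Splits) :
    (aeval M g).det = (M.charpoly.roots.map (g.eval ·)).prod := by
  have hcard : M.charpoly.roots.card = Fintype.card n := by
    rw [← hM.natDegree_eq_card_roots, Matrix.charpoly_natDegree_eq_dim]
  induction hg using Submonoid.closure_induction with
  | mem f hf =>
    rcases hf with ⟨a, rfl⟩ | ⟨a, rfl⟩
    · simp [Matrix.algebraMap_eq_diagonal, hcard]
    · calc (aeval M (X + C a)).det = (-(Matrix.scalar n (-a) - M)).det := by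
            rw [map_neg, neg_sub, sub_neg_eq_add]
            simp [Matrix.algebraMap_eq_diagonal, Pi.algebraMap_def]
        _ = (-1) ^ M.charpoly.roots.card * (M.charpoly.roots.map (-a - ·)).prod := by
            rw [Matrix.det_neg, ← Matrix.eval_charpoly,
              hM.eval_eq_prod_roots_of_monic M.charpoly_monic, hcard]
        _ = _ := by
            rw [← Multiset.card_map (-a - ·), ← Multiset.prod_map_neg, Multiset.map_map]
            simp [add_comm]
  | one => simp
  | mul f g _ _ hf hg => simp [hf, hg]

variable {K L : Type*} [CommRing K] [Field L] [IsAlgClosed L] [Algebra K L]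

theorem charpoly_aeval_eq_prod_roots_charpoly (M : Matrix n n L) (f : L[X]) :
    (aeval M f).charpoly = ((M.charpoly.roots.map (f.eval ·)).map (X - C ·)).prod := by
  refine Polynomial.funext fun z => ?_
  calc (aeval M f).charpoly.eval z = (aeval M (C z - f)).det := by
        simp [Matrix.eval_charpoly, Matrix.algebraMap_eq_diagonal, Pi.algebraMap_def]
    _ = (M.charpoly.roots.map ((C z - f).eval ·)).prod :=
        det_aeval_eq_prod_roots_charpoly (IsAlgClosed.splits _) (IsAlgClosed.splits _)
    _ = _ := by simp [eval_multiset_prod]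

theorem trace_aeval_eq_sum_roots_charpoly (M : Matrix n n L) (f : L[X]) :
    (aeval M f).trace = (M.charpoly.roots.map (f.eval ·)).sum := by
  rw [Matrix.trace_eq_sum_roots_charpoly, charpoly_aeval_eq_prod_roots_charpoly,
    roots_multiset_prod_X_sub_C]

theorem algebraMap_trace_aeval (M : Matrix n n K) (f : K[X]) :
    algebraMap K L (aeval M f).trace = ((M.charpoly.aroots L).map (aeval · f)).sum := by
  have hmap : (aeval M f).map (algebraMap K L) =
      aeval (M.map (algebraMap K L)) (f.map (algebraMap K L)) := by
    rw [aeval_map_algebraMap]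
    exact (aeval_algHom_apply (Algebra.ofId K L).mapMatrix M f).symm
  rw [AddMonoidHom.map_trace, hmap, trace_aeval_eq_sum_roots_charpoly, Matrix.charpoly_map]
  simp only [eval_map_algebraMap, aroots_def]

theorem algebraMap_trace_mulLeft_mk {K : Type*} [Field K] [Algebra K L] {P : K[X]}
    (hP : P ≠ 0) (f : K[X]) :
    algebraMap K L (LinearMap.trace K _ (LinearMap.mulLeft K (AdjoinRoot.mk P f))) =
      ((P.aroots L).map (aeval · f)).sum := by
  let pb := AdjoinRoot.powerBasis hP
  have hmat : LinearMap.trace K _ (LinearMap.mulLeft K (AdjoinRoot.mk P f)) =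
      (aeval (Algebra.leftMulMatrix pb.basis pb.gen) f).trace := by
    rw [aeval_algHom_apply, AdjoinRoot.powerBasis_gen hP, AdjoinRoot.aeval_eq]
    exact Algebra.trace_eq_matrix_trace pb.basis _
  rw [hmat, algebraMap_trace_aeval, charpoly_leftMulMatrix, AdjoinRoot.minpoly_powerBasis_gen hP,
    mul_comm, aroots_C_mul _ (by simpa using hP)]

end Trace

section ComplexRoots

theorem map_conj_aroots (P : ℝ[X]) : (P.aroots ℂ).map conj = P.aroots ℂ := by
  rw [aroots_def, roots_map_of_injective_of_card_eq_natDegree (RingHom.injective _)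
    IsAlgClosed.card_roots_eq_natDegree, Polynomial.map_map]
  congr 2
  exact RingHom.ext fun x => Complex.conj_ofReal x

/-- The complex roots of `P` in the open upper half-plane, with multiplicity: one representative of
each pair of conjugate nonreal roots. -/
noncomputable def upperRoots (P : ℝ[X]) : Multiset ℂ := (P.aroots ℂ).filter (0 < ·.im)

theorem filter_im_eq_zero_aroots (P : ℝ[X]) :
    (P.aroots ℂ).filter (·.im = 0) = P.roots.map (↑) := by
  classical
  rw [← Complex.coe_algebraMap, ← filter_roots_map_range_eq_map_roots (algebraMap ℝ ℂ).injective,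
    aroots_def]
  refine Multiset.filter_congr fun z _ => ?_
  simp [Complex.ext_iff, eq_comm]

theorem map_conj_upperRoots (P : ℝ[X]) :
    (upperRoots P).map conj = (P.aroots ℂ).filter (·.im < 0) := by
  conv_rhs => rw [← map_conj_aroots, Multiset.filter_map]
  simp [upperRoots]

theorem aroots_complex_eq_roots_add_upperRoots (P : ℝ[X]) :
    P.aroots ℂ = P.roots.map (↑) + (upperRoots P + (upperRoots P).map conj) := by
  rw [map_conj_upperRoots, upperRoots, ← filter_im_eq_zero_aroots,
    Multiset.filter_add_filter (fun z : ℂ => 0 < z.im)]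
  have hnone : (P.aroots ℂ).filter (fun z => 0 < z.im ∧ z.im < 0) = 0 :=
    Multiset.filter_eq_nil.2 fun z _ h => h.1.not_gt h.2
  rw [hnone, add_zero]
  conv_lhs => rw [← Multiset.filter_add_not (fun z : ℂ => z.im = 0) (P.aroots ℂ)]
  simp only [lt_or_lt_iff_ne, ne_eq, eq_comm]

theorem exists_real_interpolant {S : Finset ℂ} (hS : ∀ z ∈ S, conj z ∈ S) {r : ℂ → ℂ}
    (hr : ∀ z ∈ S, r (conj z) = conj (r z)) :
    ∃ f : ℝ[X], f.degree < S.card ∧ ∀ z ∈ S, aeval z f = r z := by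
  have hinj : Set.InjOn (id : ℂ → ℂ) S := Function.injective_id.injOn
  set g : ℂ[X] := Lagrange.interpolate S id r
  have hg : ∀ z ∈ S, g.eval z = r z := fun z => Lagrange.eval_interpolate_at_node r hinj
  have hconj : g.map (starRingEnd ℂ) = g := by
    refine Lagrange.eq_interpolate_of_eval_eq r hinj ?_ fun z hz => ?_
    · rw [degree_map]
      exact Lagrange.degree_interpolate_lt r hinj
    · calc (g.map (starRingEnd ℂ)).eval z = (g.map (starRingEnd ℂ)).eval (conj (conj z)) := by
            rw [Complex.conj_conj]
        _ = conj (g.eval (conj z)) := eval_map_apply _ _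
        _ = r z := by rw [hg _ (hS z hz), hr z hz, Complex.conj_conj]
  have hlift : g ∈ lifts (algebraMap ℝ ℂ) := by
    refine (lifts_iff_coeff_lifts g).2 fun n => ?_
    have : conj (g.coeff n) = g.coeff n := by rw [← coeff_map, hconj]
    obtain ⟨x, hx⟩ := Complex.conj_eq_iff_real.1 this
    exact ⟨x, hx.symm⟩
  obtain ⟨f, hf, hdeg⟩ := exists_degree_eq_of_mem_lifts hlift
  refine ⟨f, hdeg.trans_lt (Lagrange.degree_interpolate_lt r hinj), fun z hz => ?_⟩
  rw [← eval_map_algebraMap, hf, hg z hz]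

theorem trace_mulLeft_mk_eq_sum_roots_add_re {P : ℝ[X]} (hP : P ≠ 0) (g : ℝ[X]) :
    LinearMap.trace ℝ _ (LinearMap.mulLeft ℝ (AdjoinRoot.mk P g)) =
      (P.roots.map (g.eval ·)).sum + (2 * ((upperRoots P).map (aeval · g)).sum).re := by
  have htrace := algebraMap_trace_mulLeft_mk (L := ℂ) hP g
  have hreal : ((P.roots.map ((↑) : ℝ → ℂ)).map (aeval · g)).sum =
      ((P.roots.map (g.eval ·)).sum : ℝ) := by
    rw [Multiset.map_map, ← Complex.ofRealHom_eq_coe, map_multiset_sum, Multiset.map_map]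
    exact congrArg _ (Multiset.map_congr rfl fun x _ => aeval_ofReal g x)
  have hconj : (((upperRoots P).map conj).map (aeval · g)).sum =
      conj ((upperRoots P).map (aeval · g)).sum := by
    rw [map_multiset_sum, Multiset.map_map, Multiset.map_map]
    simp [aeval_conj]
  rw [aroots_complex_eq_roots_add_upperRoots, Multiset.map_add, Multiset.map_add, Multiset.sum_add,
    Multiset.sum_add, hreal, hconj, Complex.add_conj, Complex.coe_algebraMap] at htrace
  simpa using congrArg Complex.re htrace

end ComplexRoots

section CoefficientVectors

theorem range_linearCombination_X_pow (R : Type*) [Semiring R] (p : ℕ) :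
    LinearMap.range (Fintype.linearCombination R fun i : Fin p => (X : R[X]) ^ i.val) =
      degreeLT R p := by
  classical
  rw [Fintype.range_linearCombination, degreeLT_eq_span_X_pow]
  congr 1
  ext f
  simp [Fin.exists_iff]

theorem dotProduct_mulVec_eq_apply_mul_sq {R : Type*} [CommSemiring R] {p : ℕ}
    {A : Matrix (Fin p) (Fin p) R} (T : R[X] →ₗ[R] R) {Q : R[X]}
    (hA : ∀ i j, A i j = T (Q * X ^ (i.val + j.val))) (v : Fin p → R) :
    v ⬝ᵥ A *ᵥ v = T (Q * (Fintype.linearCombination R (fun i : Fin p => X ^ i.val) v) ^ 2) := by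
  rw [Fintype.linearCombination_apply, sq, Finset.sum_mul_sum]
  simp only [Finset.mul_sum, map_sum, dotProduct, Matrix.mulVec, hA]
  refine Finset.sum_congr rfl fun i _ => Finset.sum_congr rfl fun j _ => ?_
  rw [smul_mul_smul_comm, ← pow_add, mul_smul_comm, map_smul, smul_eq_mul]
  ring

end CoefficientVectors

section RootForm

open QuadraticMap

/-- The values of a real polynomial at the distinct roots of `P`, one from each conjugate pair:
the real roots, and the roots in the open upper half-plane. -/
noncomputable def evalRoots (P : ℝ[X]) :
    ℝ[X] →ₗ[ℝ] (P.roots.toFinset → ℝ) × ((upperRoots P).toFinset → ℂ) :=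
  (LinearMap.pi fun x => leval x.1).prod (LinearMap.pi fun z => (aeval z.1).toLinearMap)

/-- The quadratic form `∑ m_x Q(x) a_x² + Re ∑ 2 m_z Q(z) b_z²` in values `a_x` at the real roots
and `b_z` at the upper roots of `P`, where `m` is the multiplicity. Its value at `evalRoots P f` is
the sum of `Q f²` over all complex roots of `P`, the factor `2` standing for the conjugate roots. -/
noncomputable def rootForm (P Q : ℝ[X]) :
    QuadraticForm ℝ ((P.roots.toFinset → ℝ) × ((upperRoots P).toFinset → ℂ)) :=
  (weightedSumSquares ℝ fun x : P.roots.toFinset =>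
      P.roots.count x.1 * Q.eval x.1).prod
    (Complex.reLm.compQuadraticMap' (weightedSumSquares ℂ
      fun z : (upperRoots P).toFinset => 2 * (upperRoots P).count z.1 * aeval z.1 Q))

theorem rootForm_evalRoots {P : ℝ[X]} (hP : P ≠ 0) (Q f : ℝ[X]) :
    rootForm P Q (evalRoots P f) =
      LinearMap.trace ℝ _ (LinearMap.mulLeft ℝ (AdjoinRoot.mk P (Q * f ^ 2))) := by
  rw [trace_mulLeft_mk_eq_sum_roots_add_re hP, Finset.sum_multiset_map_count,
    Finset.sum_multiset_map_count, ← Finset.sum_coe_sort P.roots.toFinset,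
    ← Finset.sum_coe_sort (upperRoots P).toFinset, Finset.mul_sum]
  simp [rootForm, evalRoots, weightedSumSquares_apply, pow_two, mul_assoc, leval]

theorem formSignature_rootForm (P Q : ℝ[X]) :
    formSignature (rootForm P Q) = ∑ x ∈ P.roots.toFinset, sgn (Q.eval x) := by
  rw [rootForm, formSignature_prod, formSignature_re_eq_zero, add_zero,
    formSignature_weightedSumSquares_eq_sum_sign, ← Finset.sum_coe_sort P.roots.toFinset]
  refine Finset.sum_congr rfl fun x _ => ?_
  have hcount : (0 : ℝ) < P.roots.count x.1 :=
    Nat.cast_pos.2 (Multiset.count_pos.2 (Multiset.mem_toFinset.1 x.2))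
  rw [sgn_eq_sign, sign_mul, sign_pos hcount, one_mul]

theorem exists_evalRoots_eq (P : ℝ[X])
    (y : (P.roots.toFinset → ℝ) × ((upperRoots P).toFinset → ℂ)) :
    ∃ f : ℝ[X], f.degree < (P.aroots ℂ).toFinset.card ∧ evalRoots P f = y := by
  obtain ⟨a, b⟩ := y
  obtain ⟨α, rfl⟩ := Subtype.val_injective.surjective_comp_right a
  obtain ⟨β, rfl⟩ := Subtype.val_injective.surjective_comp_right b
  let r (z : ℂ) : ℂ := if z.im = 0 then α z.re else if 0 < z.im then β z else conj (β (conj z))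
  have hr (z : ℂ) : r (conj z) = conj (r z) := by
    rcases lt_trichotomy z.im 0 with hz | hz | hz
    · simp [r, hz, hz.ne, hz.not_gt]
    · simp [r, hz]
    · simp [r, hz, hz.ne', hz.not_gt]
  have hS (z : ℂ) (hz : z ∈ (P.aroots ℂ).toFinset) : conj z ∈ (P.aroots ℂ).toFinset := by
    rw [Multiset.mem_toFinset] at hz ⊢
    rw [← map_conj_aroots]
    exact Multiset.mem_map_of_mem _ hz
  obtain ⟨f, hdeg, hf⟩ := exists_real_interpolant hS fun z _ => hr z
  simp only [aroots_complex_eq_roots_add_upperRoots P, Multiset.mem_toFinset, Multiset.mem_add,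
    Multiset.mem_map] at hf
  refine ⟨f, hdeg, Prod.ext (funext fun x => ?_) (funext fun z => ?_)⟩
  · have hx : aeval (x.1 : ℂ) f = r x := hf x (.inl ⟨x, Multiset.mem_toFinset.1 x.2, rfl⟩)
    have hx' : ((f.eval x.1 : ℝ) : ℂ) = α x := by
      simpa [r] using (aeval_ofReal f x.1).symm.trans hx
    exact Complex.ofReal_injective hx'
  · have hz : z.1 ∈ upperRoots P := Multiset.mem_toFinset.1 z.2
    have him : 0 < z.1.im := (Multiset.mem_filter.1 hz).2
    simpa [evalRoots, r, him, him.ne'] using hf z (.inr (.inl hz))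

theorem evalRoots_comp_linearCombination_surjective {P : ℝ[X]} {p : ℕ}
    (hp : (P.aroots ℂ).toFinset.card ≤ p) :
    Function.Surjective
      (evalRoots P ∘ₗ Fintype.linearCombination ℝ fun i : Fin p => X ^ i.val) := by
  intro y
  obtain ⟨f, hdeg, rfl⟩ := exists_evalRoots_eq P y
  have hf : f ∈ degreeLT ℝ p := mem_degreeLT.2 (hdeg.trans_le (Nat.cast_le.2 hp))
  obtain ⟨v, rfl⟩ := (range_linearCombination_X_pow ℝ p).ge hf
  exact ⟨v, rfl⟩

theorem toQuadraticForm'_herMat {P : ℝ[X]} (hP : P ≠ 0) (Q : ℝ[X]) (p : ℕ) :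
    (HerMat p P Q).toQuadraticForm' = (rootForm P Q).comp
      (evalRoots P ∘ₗ Fintype.linearCombination ℝ fun i : Fin p => X ^ i.val) := by
  ext v
  calc (HerMat p P Q).toQuadraticForm' v = v ⬝ᵥ HerMat p P Q *ᵥ v :=
        Matrix.toLinearMap₂'_apply' _ v v
    _ = _ := dotProduct_mulVec_eq_apply_mul_sq
          (Algebra.trace ℝ (AdjoinRoot P) ∘ₗ (AdjoinRoot.mkₐ P).toLinearMap) (fun _ _ => rfl) v
    _ = _ := (rootForm_evalRoots hP Q _).symm

end RootForm

theorem hermite_signature_eq_tarski_query_general {P : ℝ[X]} (hP : P ≠ 0) (Q : ℝ[X]) {p : ℕ}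
    (hp : (P.aroots ℂ).toFinset.card ≤ p) (hsym : (HerMat p P Q).IsHermitian) :
    ((Finset.univ.filter (fun i => 0 < hsym.eigenvalues i)).card : ℤ) -
      ((Finset.univ.filter (fun i => hsym.eigenvalues i < 0)).card : ℤ) =
    ∑ θ ∈ P.roots.toFinset, sgn (Q.eval θ) := by
  rw [← formSignature_toQuadraticForm' hsym, toQuadraticForm'_herMat hP,
    formSignature_comp_of_surjective _ (evalRoots_comp_linearCombination_surjective hp),
    formSignature_rootForm]

/-- Hermite's theorem: the signature of the symmetric Hermite matrix `Her(P;Q)` (number of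
positive eigenvalues minus number of negative eigenvalues) equals the Tarski query
`TaQu(Q;P) = Σ_{θ : P(θ)=0} sign (Q(θ))`. -/
theorem hermite_signature_eq_tarski_query (P Q : Polynomial ℝ) (p : ℕ)
    (hdeg : P.natDegree = p) (hp : 1 ≤ p)
    (hsym : (HerMat p P Q).IsHermitian) :
    ((Finset.univ.filter (fun i => 0 < hsym.eigenvalues i)).card : ℤ) -
      ((Finset.univ.filter (fun i => hsym.eigenvalues i < 0)).card : ℤ) =
    ∑ θ ∈ P.roots.toFinset, sgn (Q.eval θ) := by
  have hP : P ≠ 0 := ne_zero_of_natDegree_gt (hp.trans_eq hdeg.symm)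
  have hcard : (P.aroots ℂ).toFinset.card ≤ p := by
    rw [← hdeg, ← natDegree_map (algebraMap ℝ ℂ)]
    exact (Multiset.toFinset_card_le _).trans (card_roots' _)
  exact hermite_signature_eq_tarski_query_general hP Q hcard hsym
end

section
/- Let P, Q ∈ D[u,y] with deg_y P = p ≥ 1 and deg_y Q = q, where u = (u₁,…,u_ℓ). Then for 1 ≤ j₁, j₂ ≤ p, the quantity c_p(u)^{q+2p−2} · Her(P;Q)_{j₁,j₂}, a priori in the fraction field D(u), is a polynomial in D[u], of degree at most (q+2p−2)·deg_u P + deg_u Q in u. -/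
open Polynomial

/-- `deg_u P`: the maximum total degree in the parameters `u` of the coefficients of
`P ∈ D[u][y]`. -/
noncomputable def degU {ℓ : ℕ} {D : Type*} [CommRing D]
    (P : Polynomial (MvPolynomial (Fin ℓ) D)) : ℕ :=
  P.support.sup fun i => (P.coeff i).totalDegree

/-- The `(j₁, j₂)` entry (zero-based) of the Hermite matrix of `P` and `Q` over the fraction
field `D(u)`: the trace of multiplication by `Q·y^{j₁+j₂}` on `D(u)[y]/(P)`. -/
noncomputable def herEntry {ℓ : ℕ} {D : Type*} [CommRing D] [IsDomain D]
    (P Q : Polynomial (MvPolynomial (Fin ℓ) D)) (j₁ j₂ : ℕ) :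
    FractionRing (MvPolynomial (Fin ℓ) D) :=
  let K := FractionRing (MvPolynomial (Fin ℓ) D)
  let Pk := P.map (algebraMap (MvPolynomial (Fin ℓ) D) K)
  let Qk := Q.map (algebraMap (MvPolynomial (Fin ℓ) D) K)
  LinearMap.trace K (AdjoinRoot Pk)
    (LinearMap.mulLeft K (AdjoinRoot.mk Pk (Qk * X ^ (j₁ + j₂))))

/-!
Multiplication by a root `x` of `P` in the basis `1, x, …, x^{p-1}` is the companion matrix of `P`,
and its `c_p`-multiple has the entries `-c_h`, `c_p` and `0`, all polynomials in `u`. Hence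
`c_p^h · Tr(x^h)` is the trace of the `h`-th power of a matrix over `D[u]` with entries of degree at
most `deg_u P`. Distributing `c_p^N` over `Tr(Q(x)) = ∑ c'_h Tr(x^h)`, with `N` at least every
exponent `h` that occurs, leaves `c'_h · c_p^{N-h} · (c_p^h · Tr(x^h))`, of degree at most
`deg_u Q + N · deg_u P`.
-/

section ScaledCompanion

variable {R K : Type*} [CommRing R] [CommRing K]

/-- The companion matrix of `P` multiplied by the coefficient `P.coeff n`, so that no division is
needed. It is meant for `P` of degree `n`, and acts on columns: column `j` holds the coordinates of
`P.coeff n * x ^ (j + 1)` in the basis `1, x, …, x ^ (n - 1)`. -/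
def scaledCompanion (P : R[X]) (n : ℕ) : Matrix (Fin n) (Fin n) R :=
  Matrix.of fun i j =>
    if (j : ℕ) + 1 = n then -P.coeff i else if (i : ℕ) = j + 1 then P.coeff n else 0

/-- The numerator over the denominator `P.coeff n ^ N` of the trace of `Q(x)`, for `x` a root of `P`
generating an algebra of rank `n` and `N` at least the degree of `Q`. -/
noncomputable def traceNumerator (P Q : R[X]) (n N : ℕ) : R :=
  ∑ h ∈ Finset.range (N + 1),
    Q.coeff h * (P.coeff n ^ (N - h) * (scaledCompanion P n ^ h).trace)

theorem map_scaledCompanion (φ : R →+* K) (P : R[X]) (n : ℕ) :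
    φ.mapMatrix (scaledCompanion P n) = scaledCompanion (P.map φ) n := by
  ext i j
  simp [scaledCompanion, apply_ite φ]

theorem map_traceNumerator (φ : R →+* K) (P Q : R[X]) (n N : ℕ) :
    φ (traceNumerator P Q n N) = traceNumerator (P.map φ) (Q.map φ) n N := by
  simp only [traceNumerator, map_sum, map_mul, map_pow, coeff_map, ← map_scaledCompanion,
    AddMonoidHom.map_trace φ, ← RingHom.mapMatrix_apply]

variable {S : Type*} [CommRing S] [Algebra K S] (pb : PowerBasis K S) {P Q : K[X]} {N : ℕ}

theorem coeff_dim_smul_gen_pow_dim (hP : P.natDegree ≤ pb.dim) (hroot : aeval pb.gen P = 0) :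
    P.coeff pb.dim • pb.gen ^ pb.dim = ∑ i : Fin pb.dim, (-P.coeff i) • pb.basis i := by
  rw [aeval_eq_sum_range' (Nat.lt_succ_of_le hP), Finset.sum_range_succ, Finset.sum_range,
    add_comm] at hroot
  simpa only [pb.basis_eq_pow, neg_smul, Finset.sum_neg_distrib] using
    eq_neg_of_add_eq_zero_left hroot

theorem scaledCompanion_eq_smul_leftMulMatrix (hP : P.natDegree ≤ pb.dim)
    (hroot : aeval pb.gen P = 0) :
    scaledCompanion P pb.dim = P.coeff pb.dim • Algebra.leftMulMatrix pb.basis pb.gen := by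
  ext i j
  rw [Matrix.smul_apply, Algebra.leftMulMatrix_eq_repr_mul, pb.basis_eq_pow, ← pow_succ',
    scaledCompanion, Matrix.of_apply]
  split_ifs with hj hij
  · rw [hj, ← Finsupp.smul_apply, ← map_smul, coeff_dim_smul_gen_pow_dim pb hP hroot,
      pb.basis.repr_sum_self]
  · rw [← hij, ← pb.basis_eq_pow, pb.basis.repr_self, Finsupp.single_eq_same, smul_eq_mul, mul_one]
  · have hlt : (j : ℕ) + 1 < pb.dim := by omega
    rw [← Fin.val_mk hlt, ← pb.basis_eq_pow, pb.basis.repr_self,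
      Finsupp.single_eq_of_ne (by simpa [Fin.ext_iff] using hij), smul_zero]

theorem trace_scaledCompanion_pow (hP : P.natDegree ≤ pb.dim) (hroot : aeval pb.gen P = 0)
    (h : ℕ) :
    (scaledCompanion P pb.dim ^ h).trace =
      P.coeff pb.dim ^ h * Algebra.trace K S (pb.gen ^ h) := by
  rw [scaledCompanion_eq_smul_leftMulMatrix pb hP hroot, _root_.smul_pow, Matrix.trace_smul,
    ← map_pow, ← Algebra.trace_eq_matrix_trace, smul_eq_mul]

theorem traceNumerator_eq_pow_mul_trace (hP : P.natDegree ≤ pb.dim) (hroot : aeval pb.gen P = 0)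
    (hQ : Q.natDegree ≤ N) :
    traceNumerator P Q pb.dim N =
      P.coeff pb.dim ^ N * Algebra.trace K S (aeval pb.gen Q) := by
  rw [traceNumerator, aeval_eq_sum_range' (Nat.lt_succ_of_le hQ), map_sum, Finset.mul_sum]
  refine Finset.sum_congr rfl fun h hmem => ?_
  have hhN : h ≤ N := Finset.mem_range_succ_iff.1 hmem
  rw [trace_scaledCompanion_pow pb hP hroot, map_smul, smul_eq_mul, ← mul_assoc (_ ^ _),
    pow_sub_mul_pow _ hhN, mul_left_comm]

end ScaledCompanion

section TotalDegree

variable {σ D : Type*}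

theorem totalDegree_matrix_pow_apply_le [CommSemiring D] {n : Type*} [Fintype n] [DecidableEq n]
    {M : Matrix n n (MvPolynomial σ D)} {d : ℕ} (hM : ∀ i j, (M i j).totalDegree ≤ d) (k : ℕ)
    (i j : n) : ((M ^ k) i j).totalDegree ≤ k * d := by
  induction k generalizing j with
  | zero =>
    rw [pow_zero, Matrix.one_apply]
    split_ifs <;> simp
  | succ k ih =>
    rw [pow_succ, Matrix.mul_apply, Nat.succ_mul]
    exact MvPolynomial.totalDegree_finsetSum_le fun l _ =>
      (MvPolynomial.totalDegree_mul _ _).trans (add_le_add (ih l) (hM l j))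

theorem totalDegree_coeff_mul_X_pow_le [CommSemiring D] {Q : (MvPolynomial σ D)[X]} {e : ℕ}
    (hQ : ∀ i, (Q.coeff i).totalDegree ≤ e) (k i : ℕ) :
    ((Q * X ^ k).coeff i).totalDegree ≤ e := by
  rw [coeff_mul_X_pow']
  split_ifs
  · exact hQ _
  · simp

variable [CommRing D] {P Q : (MvPolynomial σ D)[X]} {d e : ℕ}

theorem totalDegree_scaledCompanion_apply_le (hP : ∀ i, (P.coeff i).totalDegree ≤ d) (n : ℕ)
    (i j : Fin n) : (scaledCompanion P n i j).totalDegree ≤ d := by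
  rw [scaledCompanion, Matrix.of_apply]
  split_ifs
  · exact (MvPolynomial.totalDegree_neg _).trans_le (hP i)
  · exact hP n
  · simp

theorem totalDegree_traceNumerator_le (hP : ∀ i, (P.coeff i).totalDegree ≤ d)
    (hQ : ∀ i, (Q.coeff i).totalDegree ≤ e) (n N : ℕ) :
    (traceNumerator P Q n N).totalDegree ≤ N * d + e := by
  refine MvPolynomial.totalDegree_finsetSum_le fun h hmem => ?_
  have hhN : h ≤ N := Finset.mem_range_succ_iff.1 hmem
  have hpow : (P.coeff n ^ (N - h)).totalDegree ≤ (N - h) * d :=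
    (MvPolynomial.totalDegree_pow _ _).trans (Nat.mul_le_mul_left _ (hP n))
  have htrace : (scaledCompanion P n ^ h).trace.totalDegree ≤ h * d :=
    MvPolynomial.totalDegree_finsetSum_le fun i _ =>
      totalDegree_matrix_pow_apply_le (totalDegree_scaledCompanion_apply_le hP n) h i i
  calc _ ≤ e + ((N - h) * d + h * d) :=
        (MvPolynomial.totalDegree_mul _ _).trans <| add_le_add (hQ h) <|
          (MvPolynomial.totalDegree_mul _ _).trans <| add_le_add hpow htrace
    _ = N * d + e := by rw [← add_mul, Nat.sub_add_cancel hhN, add_comm]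

theorem totalDegree_coeff_le_degU {ℓ : ℕ} (P : (MvPolynomial (Fin ℓ) D)[X]) (i : ℕ) :
    (P.coeff i).totalDegree ≤ degU P := by
  by_cases hi : P.coeff i = 0
  · simp [hi]
  · exact Finset.le_sup (f := fun i => (P.coeff i).totalDegree) (mem_support_iff.2 hi)

end TotalDegree

theorem herEntry_poly_general {σ D K : Type*} [CommRing D] [Field K] (φ : MvPolynomial σ D →+* K)
    (P Q : (MvPolynomial σ D)[X]) {d e k N : ℕ} (hc : φ P.leadingCoeff ≠ 0)
    (hPd : ∀ i, (P.coeff i).totalDegree ≤ d) (hQe : ∀ i, (Q.coeff i).totalDegree ≤ e)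
    (hN : Q.natDegree + k ≤ N) :
    ∃ g : MvPolynomial σ D, g.totalDegree ≤ N * d + e ∧
      φ g = φ P.leadingCoeff ^ N * Algebra.trace K (AdjoinRoot (P.map φ))
        (AdjoinRoot.mk (P.map φ) (Q.map φ * X ^ k)) := by
  have hPk : P.map φ ≠ 0 := by
    rwa [← leadingCoeff_ne_zero, leadingCoeff_map_of_leadingCoeff_ne_zero φ hc]
  let pb := AdjoinRoot.powerBasis hPk
  have hdim : pb.dim = P.natDegree := natDegree_map_of_leadingCoeff_ne_zero φ hc
  have hroot : aeval pb.gen (P.map φ) = 0 := (AdjoinRoot.aeval_eq _).trans AdjoinRoot.mk_self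
  have hQk : ((Q * X ^ k).map φ).natDegree ≤ N :=
    natDegree_map_le.trans <|
      (natDegree_mul_le_of_le le_rfl (natDegree_X_pow_le k)).trans hN
  refine ⟨traceNumerator P (Q * X ^ k) pb.dim N,
    totalDegree_traceNumerator_le hPd (totalDegree_coeff_mul_X_pow_le hQe k) _ _, ?_⟩
  rw [map_traceNumerator, traceNumerator_eq_pow_mul_trace pb le_rfl hroot hQk, coeff_map, hdim,
    Polynomial.map_mul, Polynomial.map_pow, map_X]
  exact congrArg _ (congrArg _ (AdjoinRoot.aeval_eq _))

/-- Let `P, Q ∈ D[u][y]` with `deg_y P = p ≥ 1`, `deg_y Q = q`. Then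
`c_p(u)^{q+2p-2} · Her(P;Q)_{j₁,j₂}`, a priori in `D(u)`, is a polynomial in `D[u]` of total
degree at most `(q+2p-2)·deg_u P + deg_u Q`. -/
theorem herEntry_poly {ℓ : ℕ} {D : Type*} [CommRing D] [IsDomain D]
    (P Q : Polynomial (MvPolynomial (Fin ℓ) D)) (p q : ℕ)
    (hP : P.natDegree = p) (hp : 1 ≤ p) (hQ : Q.natDegree = q) (j₁ j₂ : Fin p) :
    ∃ g : MvPolynomial (Fin ℓ) D,
      g.totalDegree ≤ (q + 2 * p - 2) * degU P + degU Q ∧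
      algebraMap (MvPolynomial (Fin ℓ) D) (FractionRing (MvPolynomial (Fin ℓ) D)) g =
        (algebraMap (MvPolynomial (Fin ℓ) D) (FractionRing (MvPolynomial (Fin ℓ) D))
            (P.coeff p)) ^ (q + 2 * p - 2) * herEntry P Q j₁.val j₂.val := by
  subst hP hQ
  exact herEntry_poly_general (algebraMap _ _) P Q (by simpa using ne_zero_of_natDegree_gt hp)
    (totalDegree_coeff_le_degU P) (totalDegree_coeff_le_degU Q) (by omega)
end
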